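/- arXiv:1804.08211 — 4 statements merged into one kernel-verified Lean document; each statement's English description precedes it below -/
import Mathlib

section
/- Green star formula: for every finite abstract simplicial complex G and all x, y ∈ G, the entry g(x,y) of the inverse g = L⁻¹ of the connection matrix satisfies g(x,y) = ω(x)·ω(y)·χ(W⁺(x) ∩ W⁺(y)), i.e. g(x,y) = ω(x)·ω(y)·Σ_{z∈G, x⊆z and y⊆z} ω(z). -/
/-!
With `Z` the matrix of inclusions of simplices and `Ω` the diagonal matrix of their signs, the
connection matrix factors as `L = Zᵀ Ω Z`, because the nonempty subsets of a nonempty finite set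
have Euler characteristic `1`. Alternating sums over nontrivial Boolean intervals vanish, so
`Z Ω Z = Ω`; as `Ω² = 1`, this says that `Z⁻¹ = Ω Z Ω`, which is Möbius inversion on the face poset.
It follows that `L⁻¹ = Z⁻¹ Ω (Z⁻¹)ᵀ = Ω (Z Ω Zᵀ) Ω`, and the entries of `Z Ω Zᵀ` sum the signs over
common cofaces.
-/

/-- The connection matrix (over `ℚ`) of a finite abstract simplicial complex `G`:
`L x y = 1` if `x ∩ y ≠ ∅` and `L x y = 0` otherwise. -/
def connectionMatrix {V : Type} [DecidableEq V] (G : Finset (Finset V)) :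
    Matrix G G ℚ :=
  Matrix.of fun x y => if ((x : Finset V) ∩ (y : Finset V)).Nonempty then 1 else 0

section

open Finset Matrix

lemma mul_diagonal_mul_apply_of_boole {α l n R : Type*} [DecidableEq α] [NonAssocSemiring R]
    {s : Finset α} {A : Matrix l s R} {B : Matrix s n R} {i : l} {k : n}
    {p q : α → Prop} [DecidablePred p] [DecidablePred q] (d : α → R)
    (hA : ∀ j : s, A i j = if p j then 1 else 0) (hB : ∀ j : s, B j k = if q j then 1 else 0) :
    (A * diagonal (fun j : s ↦ d j) * B) i k = ∑ j ∈ s with p j ∧ q j, d j := by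
  rw [mul_apply, sum_filter, ← sum_coe_sort s]
  refine sum_congr rfl fun j _ ↦ ?_
  simp only [mul_diagonal, hA, hB, mul_boole, boole_mul, ← ite_and, and_comm]

variable {V : Type*} {R : Type*}

/-- The sign `ω(x)` of a simplex `x`. By truncated subtraction, the empty set has sign `1`. -/
def simplexSign (R : Type*) [Ring R] (x : Finset V) : R :=
  (-1) ^ (#x - 1)

section Ring

variable [Ring R]

lemma simplexSign_mul_self (x : Finset V) : simplexSign R x * simplexSign R x = 1 := by
  rw [simplexSign, ← pow_add, Even.neg_one_pow ⟨_, rfl⟩]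

lemma simplexSign_of_nonempty {x : Finset V} (hx : x.Nonempty) :
    simplexSign R x = -(-1) ^ #x := by
  obtain ⟨n, hn⟩ := Nat.exists_eq_succ_of_ne_zero hx.card_ne_zero
  rw [simplexSign, hn, Nat.succ_sub_one, pow_succ, mul_neg_one, neg_neg]

variable [DecidableEq V]

lemma sum_powerset_neg_one_pow_card_cast (t : Finset V) :
    ∑ z ∈ t.powerset, (-1 : R) ^ #z = if t = ∅ then 1 else 0 := by
  exact_mod_cast congrArg (Int.cast : ℤ → R) (sum_powerset_neg_one_pow_card (x := t))

lemma sum_Icc_neg_one_pow_card (x y : Finset V) :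
    ∑ z ∈ Icc x y, (-1 : R) ^ #z = if x = y then (-1) ^ #x else 0 := by
  by_cases hxy : x ⊆ y
  · have hdisj : ∀ u ∈ (y \ x).powerset, Disjoint x u := fun u hu ↦
      (subset_sdiff.1 (mem_powerset.1 hu)).2.symm
    have hinj : Set.InjOn (x ∪ ·) ((y \ x).powerset : Set (Finset V)) := fun u hu v hv huv ↦ by
      rw [← union_sdiff_cancel_left (hdisj u hu), ← union_sdiff_cancel_left (hdisj v hv)]
      exact congrArg (· \ x) huv
    have heq : x = y ↔ y ⊆ x := ⟨fun h ↦ h.superset, hxy.antisymm⟩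
    calc ∑ z ∈ Icc x y, (-1 : R) ^ #z
        = ∑ u ∈ (y \ x).powerset, (-1 : R) ^ #(x ∪ u) := by
          rw [Icc_eq_image_powerset hxy, sum_image hinj]
      _ = (-1) ^ #x * ∑ u ∈ (y \ x).powerset, (-1 : R) ^ #u := by
          rw [mul_sum]
          exact sum_congr rfl fun u hu ↦ by rw [card_union_of_disjoint (hdisj u hu), pow_add]
      _ = if x = y then (-1) ^ #x else 0 := by
          simp only [sum_powerset_neg_one_pow_card_cast, mul_boole, sdiff_eq_empty_iff_subset,
            heq]
  · rw [Icc_eq_empty hxy, sum_empty, if_neg fun h ↦ hxy h.subset]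

lemma sum_Icc_simplexSign {x : Finset V} (hx : x.Nonempty) (y : Finset V) :
    ∑ z ∈ Icc x y, simplexSign R z = if x = y then simplexSign R x else 0 := by
  calc ∑ z ∈ Icc x y, simplexSign R z
      = ∑ z ∈ Icc x y, -(-1 : R) ^ #z :=
        sum_congr rfl fun z hz ↦ simplexSign_of_nonempty (hx.mono (mem_Icc.1 hz).1)
    _ = if x = y then simplexSign R x else 0 := by
        rw [sum_neg_distrib, sum_Icc_neg_one_pow_card, neg_ite, neg_zero,
          simplexSign_of_nonempty hx]

lemma sum_powerset_erase_empty_simplexSign (t : Finset V) :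
    ∑ z ∈ t.powerset.erase ∅, simplexSign R z = if t.Nonempty then 1 else 0 := by
  calc ∑ z ∈ t.powerset.erase ∅, simplexSign R z
      = ∑ z ∈ t.powerset.erase ∅, -(-1 : R) ^ #z :=
        sum_congr rfl fun z hz ↦
          simplexSign_of_nonempty (nonempty_iff_ne_empty.2 (ne_of_mem_erase hz))
    _ = 1 - ∑ z ∈ t.powerset, (-1 : R) ^ #z := by
        rw [sum_neg_distrib, sum_erase_eq_sub (empty_mem_powerset t), card_empty, pow_zero,
          neg_sub]
    _ = if t.Nonempty then 1 else 0 := by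
        rw [sum_powerset_neg_one_pow_card_cast]
        obtain rfl | ht := t.eq_empty_or_nonempty
        · simp
        · simp [ht, ht.ne_empty]

end Ring

variable [DecidableEq V] {G : Finset (Finset V)}

lemma filter_subset_and_subset_eq_Icc (hG : IsRelLowerSet (G : Set (Finset V)) Finset.Nonempty)
    {x y : Finset V} (hx : x.Nonempty) (hy : y ∈ G) :
    {z ∈ G | x ⊆ z ∧ z ⊆ y} = Icc x y := by
  ext z
  rw [mem_filter, mem_Icc]
  exact ⟨And.right, fun hz ↦ ⟨hG.mem_of_le hy hz.2 (hx.mono hz.1), hz⟩⟩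

lemma filter_subset_and_subset_eq_powerset_inter_erase
    (hG : IsRelLowerSet (G : Set (Finset V)) Finset.Nonempty)
    {x : Finset V} (hx : x ∈ G) (y : Finset V) :
    {z ∈ G | z ⊆ x ∧ z ⊆ y} = (x ∩ y).powerset.erase ∅ := by
  ext z
  rw [mem_filter, mem_erase, mem_powerset, subset_inter_iff, ← nonempty_iff_ne_empty]
  exact ⟨fun hz ↦ ⟨hG.prop_of_mem hz.1, hz.2⟩, fun hz ↦ ⟨hG.mem_of_le hx hz.2.1 hz.1, hz.2⟩⟩

/-- The zeta matrix `Z` of the face poset of `G`, recording which simplices are faces of which. -/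
def inclusionMatrix (R : Type*) [Zero R] [One R] (G : Finset (Finset V)) : Matrix G G R :=
  of fun x y ↦ if (x : Finset V) ⊆ y then 1 else 0

/-- The diagonal matrix `Ω` of the signs of the simplices of `G`. -/
def signMatrix (R : Type*) [Ring R] (G : Finset (Finset V)) : Matrix G G R :=
  diagonal fun x ↦ simplexSign R (x : Finset V)

/-- The connection matrix of `G` with coefficients in `R`; `connectionMatrix` is the case
`R = ℚ`. -/
def connectionMatrixOver (R : Type*) [Zero R] [One R] (G : Finset (Finset V)) : Matrix G G R :=
  of fun x y ↦ if ((x : Finset V) ∩ y).Nonempty then 1 else 0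

section Ring

variable [Ring R]

lemma signMatrix_mul_self : signMatrix R G * signMatrix R G = 1 := by
  simp only [signMatrix, diagonal_mul_diagonal, simplexSign_mul_self, diagonal_one]

lemma connectionMatrixOver_eq_mul (hG : IsRelLowerSet (G : Set (Finset V)) Finset.Nonempty) :
    connectionMatrixOver R G = (inclusionMatrix R G)ᵀ * signMatrix R G * inclusionMatrix R G := by
  ext x y
  symm
  calc ((inclusionMatrix R G)ᵀ * signMatrix R G * inclusionMatrix R G) x y
      = ∑ z ∈ G with z ⊆ (x : Finset V) ∧ z ⊆ (y : Finset V), simplexSign R z :=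
        mul_diagonal_mul_apply_of_boole (simplexSign R) (fun _ ↦ rfl) fun _ ↦ rfl
    _ = ∑ z ∈ ((x : Finset V) ∩ y).powerset.erase ∅, simplexSign R z := by
        rw [filter_subset_and_subset_eq_powerset_inter_erase hG x.2]
    _ = connectionMatrixOver R G x y := sum_powerset_erase_empty_simplexSign _

lemma inclusionMatrix_mul_signMatrix_mul_self
    (hG : IsRelLowerSet (G : Set (Finset V)) Finset.Nonempty) :
    inclusionMatrix R G * signMatrix R G * inclusionMatrix R G = signMatrix R G := by
  ext x y
  have hx : (x : Finset V).Nonempty := hG.prop_of_mem x.2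
  calc (inclusionMatrix R G * signMatrix R G * inclusionMatrix R G) x y
      = ∑ z ∈ G with (x : Finset V) ⊆ z ∧ z ⊆ (y : Finset V), simplexSign R z :=
        mul_diagonal_mul_apply_of_boole (simplexSign R) (fun _ ↦ rfl) fun _ ↦ rfl
    _ = ∑ z ∈ Icc (x : Finset V) y, simplexSign R z := by
        rw [filter_subset_and_subset_eq_Icc hG hx y.2]
    _ = signMatrix R G x y := by
        simp only [sum_Icc_simplexSign hx, signMatrix, diagonal_apply, Subtype.ext_iff]

lemma inclusionMatrix_mul_signMatrix_mul_transpose_apply (x y : G) :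
    (inclusionMatrix R G * signMatrix R G * (inclusionMatrix R G)ᵀ) x y
      = ∑ z ∈ G with (x : Finset V) ⊆ z ∧ (y : Finset V) ⊆ z, simplexSign R z :=
  mul_diagonal_mul_apply_of_boole (simplexSign R) (fun _ ↦ rfl) fun _ ↦ rfl

end Ring

section CommRing

variable [CommRing R]

lemma inv_inclusionMatrix (hG : IsRelLowerSet (G : Set (Finset V)) Finset.Nonempty) :
    (inclusionMatrix R G)⁻¹ = signMatrix R G * inclusionMatrix R G * signMatrix R G := by
  refine inv_eq_right_inv ?_
  rw [← Matrix.mul_assoc, ← Matrix.mul_assoc, inclusionMatrix_mul_signMatrix_mul_self hG,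
    signMatrix_mul_self]

lemma inv_connectionMatrixOver (hG : IsRelLowerSet (G : Set (Finset V)) Finset.Nonempty) :
    (connectionMatrixOver R G)⁻¹ =
      signMatrix R G * (inclusionMatrix R G * signMatrix R G * (inclusionMatrix R G)ᵀ) *
        signMatrix R G := by
  set Z := inclusionMatrix R G
  set Ω := signMatrix R G
  have hΩ : Ω * Ω = 1 := signMatrix_mul_self
  have hΩt : Ωᵀ = Ω := diagonal_transpose _
  calc (connectionMatrixOver R G)⁻¹
      = Z⁻¹ * (Ω⁻¹ * Z⁻¹ᵀ) := by
        rw [connectionMatrixOver_eq_mul hG, Matrix.mul_inv_rev, Matrix.mul_inv_rev,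
          transpose_nonsing_inv]
    _ = Ω * Z * Ω * (Ω * (Ω * Z * Ω)ᵀ) := by
        rw [inv_inclusionMatrix hG, inv_eq_right_inv hΩ]
    _ = Ω * Z * (Ω * Ω) * (Ω * Zᵀ * Ω) := by
        simp only [transpose_mul, hΩt, Matrix.mul_assoc]
    _ = Ω * (Z * Ω * Zᵀ) * Ω := by
        simp only [hΩ, Matrix.mul_one, Matrix.mul_assoc]

theorem green_star_formula_general
    (hG : IsRelLowerSet (G : Set (Finset V)) Finset.Nonempty) (x y : G) :
    (connectionMatrixOver R G)⁻¹ x y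
      = simplexSign R (x : Finset V) * simplexSign R (y : Finset V) *
        ∑ z ∈ G with (x : Finset V) ⊆ z ∧ (y : Finset V) ⊆ z, simplexSign R z := by
  rw [inv_connectionMatrixOver hG, signMatrix, mul_diagonal, diagonal_mul, ← signMatrix,
    inclusionMatrix_mul_signMatrix_mul_transpose_apply, mul_right_comm]

end CommRing

end

/-- **Green star formula**: the entries of the inverse `g = L⁻¹` of the connection
matrix are `g(x,y) = ω(x)·ω(y)·χ(W⁺(x) ∩ W⁺(y))`, where `W⁺(x)` is the star of `x`. -/
theorem green_star_formula {V : Type} [DecidableEq V]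
    (G : Finset (Finset V))
    (hne : ∀ x ∈ G, x ≠ ∅)
    (hsub : ∀ x ∈ G, ∀ y : Finset V, y ⊆ x → y ≠ ∅ → y ∈ G)
    (x y : G) :
    (connectionMatrix G)⁻¹ x y
      = (-1 : ℚ) ^ ((x : Finset V).card - 1) * (-1 : ℚ) ^ ((y : Finset V).card - 1) *
        ∑ z ∈ G.filter (fun z => (x : Finset V) ⊆ z ∧ (y : Finset V) ⊆ z),
          (-1 : ℚ) ^ (z.card - 1) := by
  have hG : IsRelLowerSet (G : Set (Finset V)) Finset.Nonempty := fun z hz ↦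
    ⟨Finset.nonempty_iff_ne_empty.2 (hne z hz), fun w hwz hw ↦ hsub z hz w hwz hw.ne_empty⟩
  exact green_star_formula_general (R := ℚ) hG x y
end

section
/- Hydrogen relation: let G be a finite abstract simplicial complex in which every set has at most 2 elements (a one-dimensional complex). Let d be the matrix indexed by the elements of G with d(x,y) = 1 if x ⊊ y and d(x,y) = 0 otherwise, and let H = (d + dᵀ)² be the sign-less Hodge operator. Then L - L⁻¹ = H, where L is the connection matrix of G. -/
/-- The sign-less incidence matrix of `G`: `d x y = 1` if `x ⊊ y`, else `0`. -/
def signlessIncidence {V : Type} [DecidableEq V] (G : Finset (Finset V)) :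
    Matrix G G ℚ :=
  Matrix.of fun x y => if (x : Finset V) ⊂ (y : Finset V) then 1 else 0

section

open Finset Matrix

lemma sum_powerset_erase_empty_neg_one_pow {V R : Type*} [DecidableEq V] [Ring R] (s : Finset V) :
    ∑ t ∈ s.powerset.erase ∅, (-1 : R) ^ (#t + 1) = if s.Nonempty then 1 else 0 := by
  have hsum : ∑ t ∈ s.powerset, (-1 : R) ^ #t = if s = ∅ then 1 else 0 := by
    exact_mod_cast congrArg (Int.cast : ℤ → R) (sum_powerset_neg_one_pow_card (x := s))
  have hsplit := add_sum_erase _ (fun t => (-1 : R) ^ #t) (empty_mem_powerset s)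
  simp only [pow_succ, mul_neg_one, sum_neg_distrib]
  rw [hsum, card_empty, pow_zero] at hsplit
  rw [eq_sub_of_add_eq' hsplit]
  rcases s.eq_empty_or_nonempty with rfl | hs
  · simp
  · simp [hs, hs.ne_empty]

lemma card_eq_one_and_two_of_ssubset {V : Type*} {x y : Finset V}
    (hx : x ≠ ∅) (hy : #y ≤ 2) (hxy : x ⊂ y) : #x = 1 ∧ #y = 2 := by
  have hlt := card_lt_card hxy
  have hpos := card_pos.2 (nonempty_iff_ne_empty.2 hx)
  omega

/-- The diagonal matrix `ε` of signs `(-1) ^ dim x`. The exponent is written `#x + 1`, which has the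
same parity as `dim x = #x - 1` and avoids truncated subtraction. -/
def dimSign {V : Type} [DecidableEq V] (G : Finset (Finset V)) : Matrix G G ℚ :=
  diagonal fun x => (-1) ^ (#(x : Finset V) + 1)

variable {V : Type} [DecidableEq V] {G : Finset (Finset V)}

lemma dimSign_mul_self : dimSign G * dimSign G = 1 := by
  simp [dimSign, ← mul_pow]

lemma dimSign_transpose : (dimSign G)ᵀ = dimSign G :=
  diagonal_transpose _

lemma one_add_signlessIncidence_apply (x y : G) :
    (1 + signlessIncidence G) x y = if (x : Finset V) ⊆ y then 1 else 0 := by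
  rw [Matrix.add_apply, one_apply, signlessIncidence, of_apply]
  rcases eq_or_ne x y with rfl | hxy
  · simp
  · have hne : (x : Finset V) ≠ y := Subtype.coe_ne_coe.2 hxy
    simp [hxy, ssubset_iff_subset_ne, hne]

lemma filter_subset_eq_powerset_erase_empty (hne : ∀ x ∈ G, x ≠ ∅)
    (hsub : ∀ x ∈ G, ∀ y : Finset V, y ⊆ x → y ≠ ∅ → y ∈ G) {x s : Finset V} (hx : x ∈ G)
    (hs : s ⊆ x) : G.filter (· ⊆ s) = s.powerset.erase ∅ := by
  ext z
  simp only [mem_filter, mem_erase, mem_powerset]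
  exact ⟨fun ⟨hz, hzs⟩ => ⟨hne z hz, hzs⟩, fun ⟨hz, hzs⟩ => ⟨hsub x hx z (hzs.trans hs) hz, hzs⟩⟩

lemma connectionMatrix_eq_mul (hne : ∀ x ∈ G, x ≠ ∅)
    (hsub : ∀ x ∈ G, ∀ y : Finset V, y ⊆ x → y ≠ ∅ → y ∈ G) :
    connectionMatrix G
      = (1 + signlessIncidence G)ᵀ * dimSign G * (1 + signlessIncidence G) := by
  ext x y
  calc connectionMatrix G x y
      = ∑ z ∈ ((x : Finset V) ∩ y).powerset.erase ∅, (-1 : ℚ) ^ (#z + 1) := by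
        rw [sum_powerset_erase_empty_neg_one_pow, connectionMatrix, of_apply]
    _ = ∑ z ∈ G with z ⊆ ↑x ∩ ↑y, (-1 : ℚ) ^ (#z + 1) := by
        rw [filter_subset_eq_powerset_erase_empty hne hsub x.2 inter_subset_left]
    _ = ∑ z : G, if (z : Finset V) ⊆ ↑x ∩ ↑y then (-1 : ℚ) ^ (#(z : Finset V) + 1) else 0 := by
        rw [sum_filter, ← sum_coe_sort G]
    _ = _ := by
        rw [mul_apply]
        refine sum_congr rfl fun z _ => ?_
        rw [dimSign, mul_diagonal, transpose_apply, one_add_signlessIncidence_apply,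
          one_add_signlessIncidence_apply]
        simp only [subset_inter_iff, ite_and, ite_mul, mul_ite, one_mul, zero_mul, mul_one,
          mul_zero]
        split_ifs <;> rfl

lemma inv_connectionMatrix_eq_mul (hne : ∀ x ∈ G, x ≠ ∅)
    (hsub : ∀ x ∈ G, ∀ y : Finset V, y ⊆ x → y ≠ ∅ → y ∈ G) :
    (connectionMatrix G)⁻¹
      = (1 + signlessIncidence G)⁻¹ * dimSign G * ((1 + signlessIncidence G)⁻¹)ᵀ := by
  rw [connectionMatrix_eq_mul hne hsub, Matrix.mul_inv_rev, Matrix.mul_inv_rev,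
    inv_eq_right_inv dimSign_mul_self, transpose_nonsing_inv, Matrix.mul_assoc]

lemma signlessIncidence_mul_self (hne : ∀ x ∈ G, x ≠ ∅) (hdim : ∀ x ∈ G, #x ≤ 2) :
    signlessIncidence G * signlessIncidence G = 0 := by
  ext x z
  rw [mul_apply, Matrix.zero_apply]
  refine sum_eq_zero fun y _ => ?_
  simp only [signlessIncidence, of_apply, mul_ite, mul_one, mul_zero]
  split_ifs with hyz hxy
  · have hy_two := (card_eq_one_and_two_of_ssubset (hne x x.2) (hdim y y.2) hxy).2
    have hy_one := (card_eq_one_and_two_of_ssubset (hne y y.2) (hdim z z.2) hyz).1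
    omega
  all_goals rfl

lemma inv_one_add_signlessIncidence (hne : ∀ x ∈ G, x ≠ ∅) (hdim : ∀ x ∈ G, #x ≤ 2) :
    (1 + signlessIncidence G)⁻¹ = 1 - signlessIncidence G := by
  refine inv_eq_right_inv ?_
  rw [← (Commute.one_left _).mul_self_sub_mul_self_eq, signlessIncidence_mul_self hne hdim,
    mul_one, sub_zero]

lemma dimSign_mul_signlessIncidence (hne : ∀ x ∈ G, x ≠ ∅) (hdim : ∀ x ∈ G, #x ≤ 2) :
    dimSign G * signlessIncidence G = signlessIncidence G := by
  ext x y
  rw [dimSign, diagonal_mul, signlessIncidence, of_apply]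
  split_ifs with hxy
  · simp [(card_eq_one_and_two_of_ssubset (hne x x.2) (hdim y y.2) hxy).1]
  · rw [mul_zero]

lemma signlessIncidence_mul_dimSign (hne : ∀ x ∈ G, x ≠ ∅) (hdim : ∀ x ∈ G, #x ≤ 2) :
    signlessIncidence G * dimSign G = -signlessIncidence G := by
  ext x y
  rw [dimSign, mul_diagonal, neg_apply, signlessIncidence, of_apply]
  split_ifs with hxy
  · simp [(card_eq_one_and_two_of_ssubset (hne x x.2) (hdim y y.2) hxy).2, pow_succ]
  · rw [zero_mul, neg_zero]

lemma transpose_signlessIncidence_mul_dimSign (hne : ∀ x ∈ G, x ≠ ∅) (hdim : ∀ x ∈ G, #x ≤ 2) :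
    (signlessIncidence G)ᵀ * dimSign G = (signlessIncidence G)ᵀ := by
  simpa only [transpose_mul, dimSign_transpose] using
    congrArg transpose (dimSign_mul_signlessIncidence hne hdim)

lemma dimSign_mul_transpose_signlessIncidence (hne : ∀ x ∈ G, x ≠ ∅) (hdim : ∀ x ∈ G, #x ≤ 2) :
    dimSign G * (signlessIncidence G)ᵀ = -(signlessIncidence G)ᵀ := by
  simpa only [transpose_mul, transpose_neg, dimSign_transpose] using
    congrArg transpose (signlessIncidence_mul_dimSign hne hdim)

lemma connectionMatrix_eq_add (hne : ∀ x ∈ G, x ≠ ∅)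
    (hsub : ∀ x ∈ G, ∀ y : Finset V, y ⊆ x → y ≠ ∅ → y ∈ G) (hdim : ∀ x ∈ G, #x ≤ 2) :
    connectionMatrix G = dimSign G + signlessIncidence G + (signlessIncidence G)ᵀ
      + (signlessIncidence G)ᵀ * signlessIncidence G := by
  rw [connectionMatrix_eq_mul hne hsub, transpose_add, transpose_one, add_mul, one_mul,
    transpose_signlessIncidence_mul_dimSign hne hdim, mul_add, mul_one, add_mul,
    dimSign_mul_signlessIncidence hne hdim]
  abel

lemma inv_connectionMatrix_eq_add (hne : ∀ x ∈ G, x ≠ ∅)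
    (hsub : ∀ x ∈ G, ∀ y : Finset V, y ⊆ x → y ≠ ∅ → y ∈ G) (hdim : ∀ x ∈ G, #x ≤ 2) :
    (connectionMatrix G)⁻¹ = dimSign G + signlessIncidence G + (signlessIncidence G)ᵀ
      - signlessIncidence G * (signlessIncidence G)ᵀ := by
  rw [inv_connectionMatrix_eq_mul hne hsub, inv_one_add_signlessIncidence hne hdim,
    transpose_sub, transpose_one, sub_mul, one_mul, signlessIncidence_mul_dimSign hne hdim,
    sub_neg_eq_add, mul_sub, mul_one, add_mul, dimSign_mul_transpose_signlessIncidence hne hdim]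
  abel

lemma signlessIncidence_add_transpose_sq (hne : ∀ x ∈ G, x ≠ ∅) (hdim : ∀ x ∈ G, #x ≤ 2) :
    (signlessIncidence G + (signlessIncidence G)ᵀ) ^ 2
      = (signlessIncidence G)ᵀ * signlessIncidence G
        + signlessIncidence G * (signlessIncidence G)ᵀ := by
  have hd := signlessIncidence_mul_self hne hdim
  have hdT : (signlessIncidence G)ᵀ * (signlessIncidence G)ᵀ = 0 := by
    rw [← transpose_mul, hd, transpose_zero]
  rw [sq, add_mul, mul_add, mul_add, hd, hdT, zero_add, add_zero, add_comm]

end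

/-- **Hydrogen relation**: for a one-dimensional complex (all sets have at most 2
elements), `L - L⁻¹ = H` where `H = (d + dᵀ)²` is the sign-less Hodge operator. -/
theorem hydrogen_relation {V : Type} [DecidableEq V]
    (G : Finset (Finset V))
    (hne : ∀ x ∈ G, x ≠ ∅)
    (hsub : ∀ x ∈ G, ∀ y : Finset V, y ⊆ x → y ≠ ∅ → y ∈ G)
    (hdim : ∀ x ∈ G, x.card ≤ 2) :
    connectionMatrix G - (connectionMatrix G)⁻¹
      = (signlessIncidence G + (signlessIncidence G).transpose) ^ 2 := by
  rw [inv_connectionMatrix_eq_add hne hsub hdim, connectionMatrix_eq_add hne hsub hdim,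
    signlessIncidence_add_transpose_sq hne hdim]
  abel
end

section
/- Spectral symmetry in dimension one: let G be a finite abstract simplicial complex in which every set has at most 2 elements, and let L be its connection matrix. Then L² and L⁻² have the same characteristic polynomial; in particular the spectrum of L² coincides with the spectrum of L⁻² with multiplicities. -/
/-!
Order the simplices as vertices followed by edges, and let `B` be the vertex-edge incidence matrix.
Two edges `e`, `f` share `[e ∩ f ≠ ∅] + [e = f]` vertices, so
`L = [[1, B], [Bᵀ, BᵀB - 1]]` and `L⁻¹ = [[1 - BBᵀ, B], [Bᵀ, -1]]`.
The matrix `J = [[0, -B], [Bᵀ, 0]]` satisfies `J² = L⁻¹ - L` and `LJL = -J`. Hence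
`L² = 1 - J(JL)` and `L⁻² = 1 - (JL)J`, and the characteristic polynomial of a product does not
depend on the order of its two factors.
-/

open Finset Matrix

section Charpoly

variable {m n R : Type*} [Fintype m] [Fintype n] [DecidableEq m] [DecidableEq n] [CommRing R]

lemma charpoly_reindex_pow (e : m ≃ n) (M : Matrix m m R) (k : ℕ) :
    (reindex e e M ^ k).charpoly = (M ^ k).charpoly := by
  rw [← coe_reindexAlgEquiv R R e, ← map_pow, coe_reindexAlgEquiv, charpoly_reindex]

lemma charpoly_one_sub_mul_comm (A B : Matrix n n R) :
    (1 - A * B).charpoly = (1 - B * A).charpoly := by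
  have charpoly_one_sub (M : Matrix n n R) :
      (1 - M).charpoly = (-M).charpoly.comp (Polynomial.X + Polynomial.C (-1)) := by
    rw [← charpoly_sub_scalar, map_neg, map_one, sub_neg_eq_add, neg_add_eq_sub]
  rw [charpoly_one_sub, charpoly_one_sub, ← Matrix.neg_mul, charpoly_mul_comm, Matrix.mul_neg]

lemma charpoly_sq_eq_charpoly_inv_sq {L J : Matrix n n R} (hL : IsUnit L.det)
    (hJ : J * J = L⁻¹ - L) (hLJ : L * J * L = -J) :
    (L ^ 2).charpoly = (L⁻¹ ^ 2).charpoly := by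
  have sq_eq : L ^ 2 = 1 - J * (J * L) := by
    rw [← mul_assoc, hJ, sub_mul, nonsing_inv_mul L hL, sub_sub_cancel, sq]
  have conj_eq : J * L = -(L⁻¹ * J) := by
    rw [← mul_neg, ← hLJ, mul_assoc L, nonsing_inv_mul_cancel_left L _ hL]
  have inv_sq_eq : L⁻¹ ^ 2 = 1 - J * L * J := by
    rw [conj_eq, neg_mul, mul_assoc, hJ, mul_sub, nonsing_inv_mul L hL, sq]
    abel
  rw [sq_eq, inv_sq_eq, charpoly_one_sub_mul_comm]

end Charpoly

section Blocks

variable {m n R : Type*} [CommRing R]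

/-- The connection matrix of a one-dimensional complex in block form, vertices first: for the
complex, `B` is the vertex-edge incidence matrix and `C` its transpose. They are kept independent
because the identities below hold for any two rectangular matrices. -/
def connectionBlocks [Fintype m] [DecidableEq m] [DecidableEq n] (B : Matrix m n R)
    (C : Matrix n m R) : Matrix (m ⊕ n) (m ⊕ n) R :=
  fromBlocks 1 B C (C * B - 1)

/-- The Dirac matrix of a one-dimensional complex, with a sign on one of its two blocks. It
intertwines `connectionBlocks B C` with the negative of the inverse of that matrix. -/
def skewDirac (B : Matrix m n R) (C : Matrix n m R) : Matrix (m ⊕ n) (m ⊕ n) R :=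
  fromBlocks 0 (-B) C 0

variable [Fintype m] [Fintype n] [DecidableEq m] [DecidableEq n]

lemma connectionBlocks_mul_fromBlocks (B : Matrix m n R) (C : Matrix n m R) :
    connectionBlocks B C * fromBlocks (1 - B * C) B C (-1) = 1 := by
  rw [connectionBlocks, fromBlocks_multiply, ← fromBlocks_one]
  congr 1 <;> simp [Matrix.mul_sub, Matrix.sub_mul, Matrix.mul_assoc]

lemma inv_connectionBlocks (B : Matrix m n R) (C : Matrix n m R) :
    (connectionBlocks B C)⁻¹ = fromBlocks (1 - B * C) B C (-1) :=
  inv_eq_right_inv (connectionBlocks_mul_fromBlocks B C)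

lemma skewDirac_mul_self (B : Matrix m n R) (C : Matrix n m R) :
    skewDirac B C * skewDirac B C = (connectionBlocks B C)⁻¹ - connectionBlocks B C := by
  rw [inv_connectionBlocks, skewDirac, connectionBlocks, fromBlocks_multiply, sub_eq_add_neg,
    fromBlocks_neg, fromBlocks_add]
  congr 1 <;> simp [sub_eq_neg_add, add_comm]

lemma connectionBlocks_mul_skewDirac_mul (B : Matrix m n R) (C : Matrix n m R) :
    connectionBlocks B C * skewDirac B C * connectionBlocks B C = -skewDirac B C := by
  rw [skewDirac, connectionBlocks, fromBlocks_multiply, fromBlocks_multiply, fromBlocks_neg]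
  congr 1 <;> simp [sub_eq_add_neg, Matrix.mul_add, Matrix.add_mul, Matrix.mul_assoc]

lemma charpoly_connectionBlocks_sq (B : Matrix m n R) (C : Matrix n m R) :
    (connectionBlocks B C ^ 2).charpoly = ((connectionBlocks B C)⁻¹ ^ 2).charpoly :=
  charpoly_sq_eq_charpoly_inv_sq
    (isUnit_det_of_right_inverse (connectionBlocks_mul_fromBlocks B C))
    (skewDirac_mul_self B C) (connectionBlocks_mul_skewDirac_mul B C)

end Blocks

section SimplicialComplex

lemma inter_nonempty_iff_subset_of_card_eq_one {α : Type*} [DecidableEq α] {s t : Finset α}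
    (hs : #s = 1) : (s ∩ t).Nonempty ↔ s ⊆ t := by
  obtain ⟨a, rfl⟩ := card_eq_one.1 hs
  rw [← not_disjoint_iff_nonempty_inter, disjoint_singleton_left, not_not, singleton_subset_iff]

lemma card_inter_of_card_eq_two {α : Type*} [DecidableEq α] {s t : Finset α}
    (hs : #s = 2) (ht : #t = 2) :
    #(s ∩ t) = (if (s ∩ t).Nonempty then 1 else 0) + if s = t then 1 else 0 := by
  rcases eq_or_ne s t with rfl | hst
  · simp [hs, card_pos.1 (hs ▸ two_pos)]
  · have card_inter_lt : #(s ∩ t) < 2 := by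
      refine hs ▸ card_lt_card (inter_subset_left.ssubset_of_ne fun h => hst ?_)
      exact eq_of_subset_of_card_le (inter_eq_left.1 h) (by rw [hs, ht])
    split_ifs with h
    · have := h.card_pos
      omega
    · simp [not_nonempty_iff_eq_empty.1 h]

lemma card_vertices_subset {α : Type*} [DecidableEq α] {G : Finset (Finset α)} {s : Finset α}
    (hs : ∀ a ∈ s, {a} ∈ G) : #{v : {v : G // #v.1 = 1} | v.1.1 ⊆ s} = #s := by
  symm
  refine card_bij (fun a ha => ⟨⟨{a}, hs a ha⟩, card_singleton a⟩) ?_ ?_ ?_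
  · simp
  · simp
  · rintro ⟨⟨v, hv⟩, hv1⟩ hvs
    obtain ⟨a, rfl⟩ := card_eq_one.1 hv1
    exact ⟨a, by simpa using hvs, rfl⟩

variable {V : Type} [DecidableEq V] (G : Finset (Finset V))

/-- The vertex-edge incidence matrix of `G`. The edges are encoded as the simplices that do not
have exactly one element, so that they are complementary to the vertices. -/
def incidenceMatrix : Matrix {x : G // #x.1 = 1} {x : G // ¬#x.1 = 1} ℚ :=
  (connectionMatrix G).toBlock _ _

lemma connectionMatrix_apply (x y : G) :
    connectionMatrix G x y = if (x.1 ∩ y.1).Nonempty then 1 else 0 :=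
  rfl

lemma connectionMatrix_comm (x y : G) : connectionMatrix G x y = connectionMatrix G y x := by
  rw [connectionMatrix_apply, connectionMatrix_apply, inter_comm]

variable {G}

lemma incidenceMatrix_transpose_mul_self_apply (hG : ∀ x ∈ G, ∀ a ∈ x, {a} ∈ G)
    (e f : {x : G // ¬#x.1 = 1}) :
    ((incidenceMatrix G)ᵀ * incidenceMatrix G) e f = #(e.1.1 ∩ f.1.1) := by
  have incidence_apply (v : {x : G // #x.1 = 1}) (e : {x : G // ¬#x.1 = 1}) :
      incidenceMatrix G v e = if v.1.1 ⊆ e.1.1 then 1 else 0 := by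
    rw [incidenceMatrix, toBlock_apply, connectionMatrix_apply]
    simp only [inter_nonempty_iff_subset_of_card_eq_one v.2]
  have singleton_mem : ∀ a ∈ e.1.1 ∩ f.1.1, {a} ∈ G := fun a ha =>
    hG e.1 e.1.2 a (mem_of_mem_inter_left ha)
  simp only [mul_apply, transpose_apply, incidence_apply, ite_mul, one_mul, zero_mul, ← ite_and,
    ← subset_inter_iff, sum_boole, card_vertices_subset singleton_mem]

lemma toBlock_connectionMatrix_vertices :
    (connectionMatrix G).toBlock (fun x => #x.1 = 1) (fun x => #x.1 = 1) = 1 := by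
  ext v w
  rw [toBlock_apply, connectionMatrix_apply, one_apply]
  simp only [inter_nonempty_iff_subset_of_card_eq_one v.2, Subtype.ext_iff,
    subset_iff_eq_of_card_le (w.2.trans v.2.symm).le]

lemma toBlock_connectionMatrix_edges (hG : ∀ x ∈ G, ∀ a ∈ x, {a} ∈ G)
    (hcard : ∀ x ∈ G, #x ≠ 1 → #x = 2) :
    (connectionMatrix G).toBlock (fun x => ¬#x.1 = 1) (fun x => ¬#x.1 = 1) =
      (incidenceMatrix G)ᵀ * incidenceMatrix G - 1 := by
  ext e f
  rw [toBlock_apply, connectionMatrix_apply, Matrix.sub_apply,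
    incidenceMatrix_transpose_mul_self_apply hG, one_apply,
    card_inter_of_card_eq_two (hcard e.1 e.1.2 e.2) (hcard f.1 f.1.2 f.2)]
  simp [Subtype.val_inj]

lemma connectionMatrix_eq_reindex (hG : ∀ x ∈ G, ∀ a ∈ x, {a} ∈ G)
    (hcard : ∀ x ∈ G, #x ≠ 1 → #x = 2) :
    connectionMatrix G =
      reindex (Equiv.sumCompl fun x : G => #x.1 = 1) (Equiv.sumCompl fun x : G => #x.1 = 1)
        (connectionBlocks (incidenceMatrix G) (incidenceMatrix G)ᵀ) := by
  rw [← Equiv.symm_apply_eq, connectionBlocks, ← toBlock_connectionMatrix_vertices,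
    ← toBlock_connectionMatrix_edges hG hcard]
  ext (x | x) (y | y)
  · rfl
  · rfl
  · exact connectionMatrix_comm G x y
  · rfl

end SimplicialComplex

/-- **Spectral symmetry in dimension one**: for a one-dimensional complex, `L²`
and `L⁻²` have the same characteristic polynomial, hence the same spectrum with
multiplicities. -/
theorem spectral_symmetry_dim_one {V : Type} [DecidableEq V]
    (G : Finset (Finset V))
    (hne : ∀ x ∈ G, x ≠ ∅)
    (hsub : ∀ x ∈ G, ∀ y : Finset V, y ⊆ x → y ≠ ∅ → y ∈ G)
    (hdim : ∀ x ∈ G, x.card ≤ 2) :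
    ((connectionMatrix G) ^ 2).charpoly = ((connectionMatrix G)⁻¹ ^ 2).charpoly := by
  have hvertex : ∀ x ∈ G, ∀ a ∈ x, {a} ∈ G := fun x hx a ha =>
    hsub x hx {a} (singleton_subset_iff.2 ha) (singleton_ne_empty a)
  have hedge : ∀ x ∈ G, #x ≠ 1 → #x = 2 := by
    intro x hx hx1
    have := hdim x hx
    have := card_ne_zero.2 (nonempty_iff_ne_empty.2 (hne x hx))
    omega
  rw [connectionMatrix_eq_reindex hvertex hedge, inv_reindex, charpoly_reindex_pow,
    charpoly_reindex_pow, charpoly_connectionBlocks_sq]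
end

section
/- Expected Euler characteristic on Erdős–Rényi graphs: for every n ≥ 1 and every real p, Σ_H p^{e(H)} (1-p)^{C(n,2) - e(H)} · χ(H) = Σ_{k=1}^{n} (-1)^{k+1} · C(n,k) · p^{C(k,2)}, where the sum on the left is over all simple graphs H on the vertex set {1,…,n}, e(H) is the number of edges of H, and χ(H) = Σ_c (-1)^(|c|-1) is the Euler characteristic of the Whitney complex of H, the sum being over all nonempty cliques c of H (nonempty vertex sets inducing complete subgraphs). -/
open scoped Classical

/-!
By linearity of expectation, the expected Euler characteristic is the sum over nonempty vertex
sets `c` of `(-1)^(|c|-1)` times the probability that `c` is a clique. A set `c` is a clique of `H`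
exactly when `H` contains the complete graph on `c`, which has `C(|c|,2)` edges, so this probability
is `p^C(|c|,2)`, and there are `C(n,k)` sets `c` of size `k`.

That a random graph contains a given graph `G` with probability `p^e(G)` is the binomial theorem for
the edges outside `G`: it is a polynomial identity, valid for `p` in any commutative ring.
-/

section FinsetSums

open Finset

lemma sum_Icc_pow_card_mul_pow {α R : Type*} [DecidableEq α] [CommSemiring R] {s t : Finset α}
    (hst : s ⊆ t) (a b : R) :
    ∑ u ∈ Icc s t, a ^ #u * b ^ (#t - #u) = a ^ #s * (a + b) ^ (#t - #s) := by
  have disjoint_of_mem {v : Finset α} (hv : v ∈ (t \ s).powerset) : Disjoint s v :=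
    disjoint_sdiff.mono_right (mem_powerset.mp hv)
  have union_injOn : Set.InjOn (s ∪ ·) ((t \ s).powerset : Set (Finset α)) := by
    intro v hv w hw hvw
    rw [← union_sdiff_cancel_left (disjoint_of_mem hv),
      ← union_sdiff_cancel_left (disjoint_of_mem hw)]
    exact congrArg (· \ s) hvw
  rw [Icc_eq_image_powerset hst, sum_image union_injOn, ← card_sdiff_of_subset hst,
    ← sum_pow_mul_eq_add_pow, mul_sum]
  refine sum_congr rfl fun v hv => ?_
  rw [card_union_of_disjoint (disjoint_of_mem hv), ← Nat.sub_sub, ← card_sdiff_of_subset hst,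
    pow_add, mul_assoc]

lemma sum_powerset_nonempty_apply_card {α M : Type*} [AddCommMonoid M] (s : Finset α)
    (f : ℕ → M) :
    ∑ c ∈ s.powerset with c.Nonempty, f #c = ∑ k ∈ Icc 1 #s, (#s).choose k • f k := by
  have card_mem {c : Finset α} (hc : c ∈ s.powerset.filter Finset.Nonempty) :
      #c ∈ Icc 1 #s := by
    rw [mem_filter, mem_powerset] at hc
    exact mem_Icc.mpr ⟨hc.2.card_pos, card_le_card hc.1⟩
  rw [← sum_fiberwise_of_maps_to' fun _ => card_mem]
  refine sum_congr rfl fun k hk => ?_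
  have fiber_eq : {c ∈ s.powerset.filter Finset.Nonempty | #c = k} = s.powersetCard k := by
    ext c
    have : #c = k → c.Nonempty := fun h => card_pos.mp (h ▸ (mem_Icc.mp hk).1)
    grind
  rw [sum_const, fiber_eq, card_powersetCard]

end FinsetSums

section RandomGraphs

open Finset SimpleGraph

variable {V : Type*}

lemma spanningCoe_top_le_iff_isClique {s : Set V} {H : SimpleGraph V} :
    (⊤ : SimpleGraph s).spanningCoe ≤ H ↔ H.IsClique s := by
  rw [map_le_iff_le_comap, top_le_iff, ← induce_eq_top]

lemma card_edgeFinset_spanningCoe_top (c : Finset V)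
    [Fintype (⊤ : SimpleGraph (c : Set V)).spanningCoe.edgeSet] :
    #(⊤ : SimpleGraph (c : Set V)).spanningCoe.edgeFinset = (#c).choose 2 := by
  calc #(⊤ : SimpleGraph (c : Set V)).spanningCoe.edgeFinset
    _ = (⊤ : SimpleGraph (c : Set V)).spanningCoe.edgeSet.ncard :=
      (Set.ncard_eq_toFinset_card' _).symm
    _ = (⊤ : SimpleGraph (c : Set V)).edgeSet.ncard := by
      rw [edgeSet_map, Set.ncard_image_of_injective _ (Function.Embedding.injective _)]
    _ = #(⊤ : SimpleGraph (c : Set V)).edgeFinset := Set.ncard_eq_toFinset_card' _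
    _ = (#c).choose 2 := by
      rw [card_edgeFinset_top_eq_card_choose_two, ← Nat.card_eq_fintype_card,
        Nat.card_coe_set_eq, Set.ncard_coe_finset]

lemma exists_edgeSet_eq {K : SimpleGraph V} {s : Set (Sym2 V)} (hs : s ⊆ K.edgeSet) :
    ∃ H : SimpleGraph V, H.edgeSet = s := by
  refine ⟨fromEdgeSet s, ?_⟩
  rw [edgeSet_fromEdgeSet, sdiff_eq_left, ← Set.subset_compl_iff_disjoint_right]
  exact hs.trans K.edgeSet_subset_compl_diagSet

variable [Fintype V] {R : Type*}

/-- The Whitney complex of `H`, given by its family of nonempty faces: these are the cliques. -/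
noncomputable def whitneyComplex (H : SimpleGraph V) : Finset (Finset V) :=
  {c | c.Nonempty ∧ H.IsClique (c : Set V)}

/-- The Euler characteristic of a simplicial complex, given by its family of nonempty faces: a face
of dimension `|c| - 1` counts with sign `(-1) ^ (|c| - 1)`. -/
def eulerCharacteristic (K : Finset (Finset V)) : ℤ :=
  ∑ c ∈ K, (-1) ^ (#c - 1)

/-- The probability of the graph `H` in the Erdős–Rényi model with edge probability `p`, as a
polynomial expression in an element `p` of a commutative ring. -/
noncomputable def erdosRenyiWeight [CommRing R] (p : R) (H : SimpleGraph V) : R :=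
  p ^ #H.edgeFinset * (1 - p) ^ ((Fintype.card V).choose 2 - #H.edgeFinset)

variable [DecidableEq V]

lemma sum_Icc_pow_card_edgeFinset_mul_pow [CommSemiring R] {G K : SimpleGraph V}
    [Fintype G.edgeSet] [Fintype K.edgeSet] (hGK : G ≤ K) (a b : R) :
    ∑ H : SimpleGraph V with G ≤ H ∧ H ≤ K,
        a ^ #H.edgeFinset * b ^ (#K.edgeFinset - #H.edgeFinset) =
      a ^ #G.edgeFinset * (a + b) ^ (#K.edgeFinset - #G.edgeFinset) := by
  rw [← sum_Icc_pow_card_mul_pow (edgeFinset_mono hGK)]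
  refine sum_nbij (fun H => H.edgeFinset) (fun H hH => ?_) (fun H _ H' _ => edgeFinset_inj.mp)
    (fun S hS => ?_) fun _ _ => rfl
  · simpa using hH
  · rw [mem_coe, mem_Icc] at hS
    obtain ⟨H, hHS⟩ := exists_edgeSet_eq (K := K) (s := S) (by simpa [← coe_subset] using hS.2)
    obtain rfl : H.edgeFinset = S := coe_injective (H.coe_edgeFinset.trans hHS)
    exact ⟨H, by simpa using hS, rfl⟩

variable [CommRing R]

lemma sum_erdosRenyiWeight_of_le (p : R) (G : SimpleGraph V) [Fintype G.edgeSet] :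
    ∑ H with G ≤ H, erdosRenyiWeight p H = p ^ #G.edgeFinset := by
  have h := sum_Icc_pow_card_edgeFinset_mul_pow (le_top : G ≤ ⊤) p (1 - p)
  simpa only [erdosRenyiWeight, le_top, and_true, card_edgeFinset_top_eq_card_choose_two,
    add_sub_cancel, one_pow, mul_one] using h

lemma sum_erdosRenyiWeight_of_isClique (p : R) (c : Finset V) :
    ∑ H : SimpleGraph V with H.IsClique (c : Set V), erdosRenyiWeight p H =
      p ^ (#c).choose 2 := by
  simp only [← spanningCoe_top_le_iff_isClique, sum_erdosRenyiWeight_of_le,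
    card_edgeFinset_spanningCoe_top]

theorem expected_euler_characteristic_general (p : R) :
    ∑ H : SimpleGraph V, erdosRenyiWeight p H * (eulerCharacteristic (whitneyComplex H) : R) =
      ∑ k ∈ Icc 1 (Fintype.card V),
        (-1) ^ (k + 1) * ((Fintype.card V).choose k : R) * p ^ k.choose 2 := by
  calc ∑ H : SimpleGraph V, erdosRenyiWeight p H * (eulerCharacteristic (whitneyComplex H) : R)
    _ = ∑ H : SimpleGraph V, ∑ c ∈ whitneyComplex H, (-1) ^ (#c - 1) * erdosRenyiWeight p H := by
      simp only [eulerCharacteristic, Int.cast_sum, Int.cast_pow, Int.cast_neg, Int.cast_one,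
        mul_sum, mul_comm]
    _ = ∑ c : Finset V with c.Nonempty, ∑ H : SimpleGraph V with H.IsClique (c : Set V),
          (-1) ^ (#c - 1) * erdosRenyiWeight p H :=
      sum_comm' fun H c => by simp [whitneyComplex, and_comm]
    _ = ∑ c ∈ (univ : Finset V).powerset with c.Nonempty, (-1) ^ (#c - 1) * p ^ (#c).choose 2 := by
      simp only [← mul_sum, sum_erdosRenyiWeight_of_isClique, powerset_univ]
    _ = ∑ k ∈ Icc 1 (Fintype.card V),
          (Fintype.card V).choose k • ((-1) ^ (k - 1) * p ^ k.choose 2) :=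
      sum_powerset_nonempty_apply_card univ fun k => (-1) ^ (k - 1) * p ^ k.choose 2
    _ = ∑ k ∈ Icc 1 (Fintype.card V),
          (-1) ^ (k + 1) * ((Fintype.card V).choose k : R) * p ^ k.choose 2 := by
      refine sum_congr rfl fun k hk => ?_
      obtain ⟨j, rfl⟩ := Nat.exists_eq_add_of_le' (mem_Icc.mp hk).1
      rw [nsmul_eq_mul, Nat.add_sub_cancel]
      ring

end RandomGraphs

/-- **Expected Euler characteristic on Erdős–Rényi graphs**: for every `n ≥ 1`
and every real `p`, the expectation of the Euler characteristic of the Whitney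
complex over all graphs on `{1,…,n}` (each graph `H` having probability
`p^{e(H)}(1-p)^{C(n,2)-e(H)}`) equals `Σ_{k=1}^n (-1)^{k+1} C(n,k) p^{C(k,2)}`. -/
theorem expected_euler_characteristic (n : ℕ) (hn : 1 ≤ n) (p : ℝ) :
    ∑ H : SimpleGraph (Fin n),
        p ^ H.edgeFinset.card * (1 - p) ^ (Nat.choose n 2 - H.edgeFinset.card) *
          ∑ c ∈ (Finset.univ : Finset (Fin n)).powerset.filter
              (fun c : Finset (Fin n) => c.Nonempty ∧ H.IsClique (c : Set (Fin n))),
            (-1 : ℝ) ^ (c.card - 1)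
      = ∑ k ∈ Finset.Icc 1 n,
          (-1 : ℝ) ^ (k + 1) * (Nat.choose n k : ℝ) * p ^ (Nat.choose k 2) := by
  have h := expected_euler_characteristic_general (V := Fin n) p
  push_cast [erdosRenyiWeight, eulerCharacteristic, whitneyComplex, Fintype.card_fin] at h
  rw [Finset.powerset_univ]
  convert h
end
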